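/- arXiv:0904.3379 — 3 statements merged into one kernel-verified Lean document; each statement's English description precedes it below -/
import Mathlib

section
/- Let n ≥ 2 and N ≥ 1 be integers and let j be an integer with 0 ≤ j ≤ N−1. Then ∑_{L=N+1+j}^{2N} c_{N;L,j,L−N−j−1} / ( 2^{n/2+L−N+j} · Γ(n/2+L−N+j+1) ) = (1/2^{n/2}) · (−1)^j / ( 4^j (2j+1) Γ(n/2+2j+1) ). -/
open Finset

/-- Generalized binomial coefficient `binom(x, k) = x(x-1)⋯(x-k+1)/k!` for real `x`. -/
noncomputable def rbinom (x : ℝ) (k : ℕ) : ℝ :=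
  (∏ i ∈ Finset.range k, (x - i)) / (Nat.factorial k : ℝ)

/-- The constant `c_n = Γ((n−1)/2)/(2 π^{n/2} Γ(1/2))`. -/
noncomputable def cConst (n : ℕ) : ℝ :=
  Real.Gamma (((n : ℝ) - 1) / 2) / (2 * Real.pi ^ ((n : ℝ) / 2) * Real.Gamma (1 / 2))

/-- The constant `γ_{2j+1} = i^{−(2j+1)} π^{n/2} Γ(j+1/2)/Γ(n/2+j+1/2)`. -/
noncomputable def gammaConst (n j : ℕ) : ℂ :=
  Complex.I ^ (-(2 * (j : ℤ) + 1)) * ((Real.pi ^ ((n : ℝ) / 2) : ℝ) : ℂ)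
    * ((Real.Gamma ((j : ℝ) + 1 / 2) : ℝ) : ℂ)
    / ((Real.Gamma ((n : ℝ) / 2 + j + 1 / 2) : ℝ) : ℂ)

/-- The coefficient `c_{N;L,j,k}`. -/
noncomputable def cCoef (n N L j k : ℕ) : ℂ :=
  Complex.I * (-1 : ℂ) ^ k * ((cConst n : ℝ) : ℂ) * gammaConst n j
    * (2 : ℂ) ^ k * (((N - j).factorial : ℝ) : ℂ) * ((n : ℂ) - 1)
    * ((rbinom ((L : ℝ) - 1 + (n : ℝ) / 2) (N - j) : ℝ) : ℂ)
    * ((rbinom ((n : ℝ) / 2 + j + L - N - 1) k : ℝ) : ℂ)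
    * ((rbinom ((N : ℝ) + (n : ℝ) / 2 - 1 / 2) N : ℝ) : ℂ)
    / ((((2 * N - L).factorial : ℝ) : ℂ)
        * (((L : ℝ) - N + (n : ℝ) / 2 - 1 / 2 : ℝ) : ℂ)
        * (((L - N - j - 1 - k).factorial : ℝ) : ℂ)
        * ((rbinom ((N : ℝ) - 1 / 2) N : ℝ) : ℂ))

/-!
Put `N = j + 1 + M` and `L = N + 1 + j + k`. All Gamma values collapse into rising factorials, and
the sum becomes a multiple of `∑ k ≤ M, (-1)^k (M choose k) (b + k)_M / (a + k)` with
`a = n/2 + j + 1/2` and `b = n/2 + 2j + 2`. The polynomial `(X + b)_M` has degree `M`, so it equals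
its Lagrange interpolant at the nodes `0, …, M`; the first barycentric form of the interpolant,
evaluated at `-a`, gives the value `M! (b - a)_M / (a)_{M+1}` of the sum.
-/

section PartialFractions

variable {K : Type*} [Field K]

lemma eval_neg_nodal_range_natCast (m : ℕ) (x : K) :
    (Lagrange.nodal (range m) (fun i : ℕ ↦ (i : K))).eval (-x)
      = (-1) ^ m * (ascPochhammer K m).eval x := by
  have h := ascPochhammer_eval_neg_eq_descPochhammer K (-x) m
  rw [neg_neg] at h
  rw [Lagrange.eval_nodal, ← descPochhammer_eval_eq_prod_range, h, ← mul_assoc, ← mul_pow]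
  simp

lemma prod_erase_range_natCast_sub {M k : ℕ} (hk : k ≤ M) :
    ∏ i ∈ (range (M + 1)).erase k, ((k : K) - i)
      = (-1) ^ (M - k) * (k.factorial * (M - k).factorial) := by
  induction M, hk using Nat.le_induction with
  | base =>
    rw [range_add_one, erase_insert notMem_range_self, ← descPochhammer_eval_eq_prod_range,
      descPochhammer_eval_eq_descFactorial, Nat.descFactorial_self]
    simp
  | succ M hk ih =>
    rw [range_add_one, erase_insert_of_ne (by omega), prod_insert (by simp), ih,
      Nat.succ_sub hk, Nat.factorial_succ, pow_succ]
    push_cast [Nat.cast_sub hk]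
    ring

variable [CharZero K]

lemma nodalWeight_range_natCast {M k : ℕ} (hk : k ≤ M) :
    Lagrange.nodalWeight (range (M + 1)) (fun i : ℕ ↦ (i : K)) k
      = (-1) ^ (M - k) * M.choose k / M.factorial := by
  have hM : (M.factorial : K) ≠ 0 := Nat.cast_ne_zero.2 M.factorial_ne_zero
  rw [Lagrange.nodalWeight, prod_inv_distrib, prod_erase_range_natCast_sub hk, mul_inv,
    ← inv_pow, inv_neg_one, Nat.cast_choose K hk]
  field_simp

lemma sum_neg_one_pow_mul_choose_mul_eval_div {p : Polynomial K} {M : ℕ} (hp : p.natDegree ≤ M)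
    {a : K} (ha : ∀ k ≤ M, a + k ≠ 0) :
    ∑ k ∈ range (M + 1), (-1) ^ k * M.choose k * p.eval (k : K) / (a + k)
      = M.factorial * p.eval (-a) / (ascPochhammer K (M + 1)).eval a := by
  have hM : (M.factorial : K) ≠ 0 := Nat.cast_ne_zero.2 M.factorial_ne_zero
  have hnodes : ∀ k ∈ range (M + 1), -a ≠ (k : K) := fun k hk h ↦
    ha k (mem_range_succ_iff.1 hk) (by rw [← h, add_neg_cancel])
  have hpoch : (ascPochhammer K (M + 1)).eval a ≠ 0 := fun h ↦
    Lagrange.eval_nodal_not_at_node hnodes (by rw [eval_neg_nodal_range_natCast, h, mul_zero])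
  have hdeg : p.degree < #(range (M + 1)) := by
    rw [card_range]
    exact (Polynomial.degree_le_of_natDegree_le hp).trans_lt (by exact_mod_cast M.lt_succ_self)
  have hinterp := congrArg (Polynomial.eval (-a))
    (Lagrange.eq_interpolate (v := fun i : ℕ ↦ (i : K)) Nat.cast_injective.injOn hdeg)
  rw [Lagrange.eval_interpolate_not_at_node _ hnodes, eval_neg_nodal_range_natCast] at hinterp
  rw [eq_div_iff hpoch, hinterp, sum_mul, mul_sum, mul_sum]
  refine sum_congr rfl fun k hk ↦ ?_
  have hkM := mem_range_succ_iff.1 hk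
  have hak := ha k hkM
  have hsign : (-1 : K) ^ (M + 1) * (-1) ^ (M - k) = -(-1) ^ k := by
    rw [← pow_add, show M + 1 + (M - k) = 2 * (M - k) + (k + 1) by omega, pow_add, pow_mul]
    simp [pow_succ]
  rw [nodalWeight_range_natCast hkM, show -a - (k : K) = -(a + k) by ring, inv_neg]
  field_simp
  linear_combination M.choose k * p.eval (k : K) * hsign

lemma sum_neg_one_pow_mul_choose_mul_ascPochhammer_div {M : ℕ} {a : K} (b : K)
    (ha : ∀ k ≤ M, a + k ≠ 0) :
    ∑ k ∈ range (M + 1), (-1) ^ k * M.choose k * (ascPochhammer K M).eval (b + k) / (a + k)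
      = M.factorial * (ascPochhammer K M).eval (b - a) / (ascPochhammer K (M + 1)).eval a := by
  have h := sum_neg_one_pow_mul_choose_mul_eval_div
    (p := (ascPochhammer K M).comp (Polynomial.X + Polynomial.C b)) (M := M)
    (by rw [Polynomial.natDegree_comp, Polynomial.natDegree_X_add_C, ascPochhammer_natDegree,
      mul_one]) ha
  simpa only [Polynomial.eval_comp, Polynomial.eval_add, Polynomial.eval_X, Polynomial.eval_C,
    add_comm _ b, ← sub_eq_add_neg] using h

end PartialFractions

section RisingFactorials

lemma ascPochhammer_eval_add {R : Type*} [CommSemiring R] (x : R) (k m : ℕ) :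
    (ascPochhammer R (k + m)).eval x
      = (ascPochhammer R k).eval x * (ascPochhammer R m).eval (x + k) := by
  simp [← ascPochhammer_mul]

lemma ascPochhammer_eval_succ_left {R : Type*} [CommSemiring R] (x : R) (m : ℕ) :
    (ascPochhammer R (m + 1)).eval x = x * (ascPochhammer R m).eval (x + 1) := by
  simp [ascPochhammer_succ_left]

lemma Gamma_add_natCast {x : ℝ} {k : ℕ} (hx : ∀ i < k, x + i ≠ 0) :
    Real.Gamma (x + k) = Real.Gamma x * (ascPochhammer ℝ k).eval x := by
  induction k with
  | zero => simp
  | succ k ih =>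
    rw [ascPochhammer_succ_eval, Nat.cast_succ, ← add_assoc,
      Real.Gamma_add_one (hx k k.lt_succ_self), ih fun i hi ↦ hx i (hi.trans k.lt_succ_self)]
    ring

lemma rbinom_eq_ascPochhammer_div (x : ℝ) (k : ℕ) :
    rbinom x k = (ascPochhammer ℝ k).eval (x - k + 1) / k.factorial := by
  rw [rbinom, ← descPochhammer_eval_eq_prod_range, descPochhammer_eval_eq_ascPochhammer]

end RisingFactorials

section Coefficients

variable {n : ℕ}

lemma cConst_mul_sub_one (hn : n ≠ 1) :
    cConst n * (n - 1)
      = Real.Gamma (n / 2 + 1 / 2) / (Real.pi ^ ((n : ℝ) / 2) * Real.Gamma (1 / 2)) := by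
  have hn' : ((n : ℝ) - 1) / 2 ≠ 0 :=
    div_ne_zero (sub_ne_zero.2 (Nat.cast_ne_one.2 hn)) two_ne_zero
  rw [cConst, show (n : ℝ) / 2 + 1 / 2 = (n - 1) / 2 + 1 by ring, Real.Gamma_add_one hn']
  ring

lemma I_mul_gammaConst (n j : ℕ) :
    Complex.I * gammaConst n j
      = (((-1) ^ j * (Real.pi ^ ((n : ℝ) / 2) * Real.Gamma (j + 1 / 2)
          / Real.Gamma (n / 2 + j + 1 / 2)) : ℝ) : ℂ) := by
  have hI : Complex.I * Complex.I ^ (-(2 * (j : ℤ) + 1)) = (-1) ^ j := by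
    rw [← zpow_one_add₀ Complex.I_ne_zero, show 1 + -(2 * (j : ℤ) + 1) = 2 * (-j) by ring, zpow_mul,
      zpow_ofNat, Complex.I_sq, zpow_neg, zpow_natCast, ← inv_pow, inv_neg_one]
  rw [gammaConst]
  push_cast
  rw [← hI]
  ring

lemma I_mul_cConst_mul_gammaConst_mul_rbinom_div_rbinom (hn : n ≠ 1) (j m : ℕ) :
    Complex.I * cConst n * gammaConst n j * ((n : ℂ) - 1)
        * rbinom ((j + m : ℕ) + (n : ℝ) / 2 - 1 / 2) (j + m)
        / rbinom ((j + m : ℕ) - 1 / 2) (j + m)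
      = (((-1) ^ j * (ascPochhammer ℝ m).eval ((n : ℝ) / 2 + j + 1 / 2)
          / (ascPochhammer ℝ m).eval ((j : ℝ) + 1 / 2) : ℝ) : ℂ) := by
  have hnum : rbinom ((j + m : ℕ) + (n : ℝ) / 2 - 1 / 2) (j + m)
      = (ascPochhammer ℝ j).eval ((n : ℝ) / 2 + 1 / 2)
        * (ascPochhammer ℝ m).eval ((n : ℝ) / 2 + j + 1 / 2) / (j + m).factorial := by
    rw [rbinom_eq_ascPochhammer_div, add_right_comm _ (j : ℝ), ← ascPochhammer_eval_add]
    ring_nf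
  have hden : rbinom ((j + m : ℕ) - 1 / 2) (j + m)
      = (ascPochhammer ℝ j).eval (1 / 2) * (ascPochhammer ℝ m).eval ((j : ℝ) + 1 / 2)
        / (j + m).factorial := by
    rw [rbinom_eq_ascPochhammer_div, add_comm (j : ℝ), ← ascPochhammer_eval_add]
    ring_nf
  have hΓnum : Real.Gamma ((j : ℝ) + 1 / 2)
      = Real.Gamma (1 / 2) * (ascPochhammer ℝ j).eval (1 / 2) := by
    rw [add_comm, Gamma_add_natCast fun _ _ ↦ by positivity]
  have hΓden : Real.Gamma ((n : ℝ) / 2 + j + 1 / 2)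
      = Real.Gamma (n / 2 + 1 / 2) * (ascPochhammer ℝ j).eval ((n : ℝ) / 2 + 1 / 2) := by
    rw [add_right_comm, Gamma_add_natCast fun _ _ ↦ by positivity]
  have hregroup : Complex.I * cConst n * gammaConst n j * ((n : ℂ) - 1)
      = ((cConst n * (n - 1) : ℝ) : ℂ) * (Complex.I * gammaConst n j) := by
    push_cast
    ring
  rw [hregroup, I_mul_gammaConst, cConst_mul_sub_one hn, hnum, hden, hΓnum, hΓden]
  norm_cast
  have hΓ_pos := Real.Gamma_pos_of_pos (show (0 : ℝ) < n / 2 + 1 / 2 by positivity)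
  have hnum_pos := ascPochhammer_pos j ((n : ℝ) / 2 + 1 / 2) (by positivity)
  have hden_pos := ascPochhammer_pos j (1 / 2 : ℝ) (by positivity)
  generalize (n : ℝ) / 2 + 1 / 2 = x at *
  field_simp

-- With `N = j + (M + 1)` and `L = N + 1 + j + k`, the largest admissible last index,
-- `L - N - j - 1`, is `k`.
lemma cCoef_last (hn : n ≠ 1) (M j k : ℕ) :
    cCoef n (j + (M + 1)) (j + (M + 1) + 1 + j + k) j k
      = (((-1) ^ j * (ascPochhammer ℝ (M + 1)).eval ((n : ℝ) / 2 + j + 1 / 2)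
            / (ascPochhammer ℝ (M + 1)).eval ((j : ℝ) + 1 / 2)
          * ((-1) ^ k * 2 ^ k * (ascPochhammer ℝ (k + (M + 1))).eval ((n : ℝ) / 2 + 2 * j + 1)
            / (k.factorial * (M - k).factorial * ((n : ℝ) / 2 + j + 1 / 2 + k))) : ℝ) : ℂ) := by
  have hupper : (M + 1).factorial
        * rbinom ((j + (M + 1) + 1 + j + k : ℕ) - 1 + (n : ℝ) / 2) (M + 1)
      = (ascPochhammer ℝ (M + 1)).eval ((n : ℝ) / 2 + 2 * j + 1 + k) := by
    rw [rbinom_eq_ascPochhammer_div, mul_div_cancel₀ _ (by positivity)]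
    push_cast
    ring_nf
  have hlower : rbinom ((n : ℝ) / 2 + j + (j + (M + 1) + 1 + j + k : ℕ) - (j + (M + 1) : ℕ) - 1) k
      = (ascPochhammer ℝ k).eval ((n : ℝ) / 2 + 2 * j + 1) / k.factorial := by
    rw [rbinom_eq_ascPochhammer_div]
    push_cast
    ring_nf
  have hlinear : ((j + (M + 1) + 1 + j + k : ℕ) : ℝ) - (j + (M + 1) : ℕ) + (n : ℝ) / 2 - 1 / 2
      = (n : ℝ) / 2 + j + 1 / 2 + k := by
    push_cast
    ring
  rw [Complex.ofReal_mul, ← I_mul_cConst_mul_gammaConst_mul_rbinom_div_rbinom hn,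
    ascPochhammer_eval_add, ← hupper, cCoef, hlinear, hlower, Nat.add_sub_cancel_left,
    show 2 * (j + (M + 1)) - (j + (M + 1) + 1 + j + k) = M - k by omega,
    show j + (M + 1) + 1 + j + k - (j + (M + 1)) - j - 1 - k = 0 by omega]
  simp only [Complex.ofReal_mul, Complex.ofReal_div, Complex.ofReal_pow, Complex.ofReal_neg,
    Complex.ofReal_one, Complex.ofReal_ofNat, Nat.factorial_zero, Nat.cast_one]
  ring

lemma cCoef_last_div (hn : n ≠ 1) {M k : ℕ} (hk : k ≤ M) (j : ℕ) :
    cCoef n (j + (M + 1)) (j + (M + 1) + 1 + j + k) j k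
        / (((2 : ℝ) ^ ((n : ℝ) / 2 + (j + (M + 1) + 1 + j + k : ℕ) - (j + (M + 1) : ℕ) + j)
          * Real.Gamma ((n : ℝ) / 2 + (j + (M + 1) + 1 + j + k : ℕ) - (j + (M + 1) : ℕ) + j + 1)
            : ℝ) : ℂ)
      = (((-1) ^ j * (ascPochhammer ℝ (M + 1)).eval ((n : ℝ) / 2 + j + 1 / 2)
            / ((ascPochhammer ℝ (M + 1)).eval ((j : ℝ) + 1 / 2)
              * (2 ^ ((n : ℝ) / 2) * (2 * 4 ^ j) * Real.Gamma ((n : ℝ) / 2 + 2 * j + 1)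
                * M.factorial))
          * ((-1) ^ k * M.choose k
            * (ascPochhammer ℝ M).eval ((n : ℝ) / 2 + 2 * j + 2 + k)
            / ((n : ℝ) / 2 + j + 1 / 2 + k)) : ℝ) : ℂ) := by
  have hpow : (2 : ℝ) ^ ((n : ℝ) / 2 + (j + (M + 1) + 1 + j + k : ℕ) - (j + (M + 1) : ℕ) + j)
      = 2 ^ ((n : ℝ) / 2) * (2 * 4 ^ j) * 2 ^ k := by
    rw [show (n : ℝ) / 2 + (j + (M + 1) + 1 + j + k : ℕ) - (j + (M + 1) : ℕ) + j
        = n / 2 + (2 * j + 1 + k : ℕ) by push_cast; ring,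
      Real.rpow_add two_pos, Real.rpow_natCast, pow_add, pow_succ, pow_mul,
      show (2 : ℝ) ^ 2 = 4 by norm_num]
    ring
  have hΓ : Real.Gamma
        ((n : ℝ) / 2 + (j + (M + 1) + 1 + j + k : ℕ) - (j + (M + 1) : ℕ) + j + 1)
      = Real.Gamma ((n : ℝ) / 2 + 2 * j + 1)
        * (ascPochhammer ℝ (k + 1)).eval ((n : ℝ) / 2 + 2 * j + 1) := by
    rw [← Gamma_add_natCast fun _ _ ↦ by positivity]
    push_cast
    ring_nf
  have hpoch : (ascPochhammer ℝ (k + (M + 1))).eval ((n : ℝ) / 2 + 2 * j + 1)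
      = (ascPochhammer ℝ (k + 1)).eval ((n : ℝ) / 2 + 2 * j + 1)
        * (ascPochhammer ℝ M).eval ((n : ℝ) / 2 + 2 * j + 2 + k) := by
    rw [show k + (M + 1) = k + 1 + M by ring, ascPochhammer_eval_add]
    push_cast
    ring_nf
  have hpoch_pos := ascPochhammer_pos (k + 1) ((n : ℝ) / 2 + 2 * j + 1) (by positivity)
  have hfac : (M.factorial : ℝ) ≠ 0 := Nat.cast_ne_zero.2 M.factorial_ne_zero
  rw [cCoef_last hn, ← Complex.ofReal_div, hpow, hΓ, hpoch, Nat.cast_choose ℝ hk]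
  congr 1
  generalize (n : ℝ) / 2 + 2 * j + 1 = y at *
  field_simp

end Coefficients

theorem stmt8 (n N j : ℕ) (hn : 2 ≤ n) (hN : 1 ≤ N) (hj : j + 1 ≤ N) :
    ∑ L ∈ Finset.Icc (N + 1 + j) (2 * N),
        cCoef n N L j (L - N - j - 1)
          / ((((2 : ℝ) ^ ((n : ℝ) / 2 + L - N + j)
                * Real.Gamma ((n : ℝ) / 2 + L - N + j + 1) : ℝ)) : ℂ)
      = ((1 / (2 : ℝ) ^ ((n : ℝ) / 2) : ℝ) : ℂ)
          * ((-1 : ℂ) ^ j / ((4 : ℂ) ^ j * (2 * (j : ℂ) + 1)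
              * ((Real.Gamma ((n : ℝ) / 2 + 2 * j + 1) : ℝ) : ℂ))) := by
  obtain ⟨M, rfl⟩ : ∃ M, N = j + (M + 1) := ⟨N - (j + 1), by omega⟩
  have hlast (k : ℕ) : j + (M + 1) + 1 + j + k - (j + (M + 1)) - j - 1 = k := by omega
  have hdiff : (n : ℝ) / 2 + 2 * j + 2 - (n / 2 + j + 1 / 2) = j + 1 / 2 + 1 := by ring
  rw [← Ico_add_one_right_eq_Icc, sum_Ico_eq_sum_range,
    show 2 * (j + (M + 1)) + 1 - (j + (M + 1) + 1 + j) = M + 1 by omega]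
  simp only [hlast]
  rw [sum_congr rfl fun k hk ↦ cCoef_last_div (by omega) (mem_range_succ_iff.1 hk) j,
    ← Complex.ofReal_sum, ← mul_sum,
    sum_neg_one_pow_mul_choose_mul_ascPochhammer_div _ fun _ _ ↦ by positivity, hdiff,
    ascPochhammer_eval_succ_left ((j : ℝ) + 1 / 2)]
  have hpoch_n := (ascPochhammer_pos (M + 1) ((n : ℝ) / 2 + j + 1 / 2) (by positivity)).ne'
  have hpoch_j := (ascPochhammer_pos M ((j : ℝ) + 1 / 2 + 1) (by positivity)).ne'
  trans ((1 / 2 ^ ((n : ℝ) / 2) * ((-1) ^ j / (4 ^ j * (2 * j + 1)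
      * Real.Gamma (n / 2 + 2 * j + 1))) : ℝ) : ℂ)
  · generalize (ascPochhammer ℝ (M + 1)).eval ((n : ℝ) / 2 + j + 1 / 2) = A at *
    generalize (ascPochhammer ℝ M).eval ((j : ℝ) + 1 / 2 + 1) = B at *
    field_simp
  · push_cast
    rfl
end

section
/- Let n ≥ 1 and let j ∈ {1, …, n}. There is a constant C > 0, depending only on n, such that for every x ∈ ℝ^n with |x| > 2 the limit L(x) := lim_{ε→0⁺} ∫_{{y : ε < |y| < 1}} ( (x_j − y_j) / |x−y|^{n+1} ) · ( y_j / |y|^{n+1} ) dy exists and satisfies |L(x)| ≤ C / |x|^{n+1}. -/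
open MeasureTheory Filter

/-!
Write `K` for the kernel. It is odd, so its integral over each shell `ε < ‖y‖ < 1` vanishes and
`K (x - y) * K y` may be replaced by `(K (x - y) - K x) * K y` before letting `ε → 0`. Away from the
origin `K` is smooth at the scale of the distance to it: `|K (x - y) - K x| ≤ C ‖y‖ / ‖x‖ ^ (n + 1)`
when `2 ‖y‖ ≤ ‖x‖`. The gained factor `‖y‖` cancels one power of the singularity of `K y`, which
makes the new integrand integrable at `0`, and the same bound gives the decay in `x`.
-/

/-- The spherical shell `{y | ε < ‖y‖ < r}` about the origin; `shell 0 r` is the punctured ball. -/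
def shell {E : Type*} [Norm E] (ε r : ℝ) : Set E :=
  {y | ε < ‖y‖ ∧ ‖y‖ < r}

/-- The kernel `z ↦ φ z / ‖z‖ ^ p` attached to a linear functional `φ`. On `ℝⁿ`, with `p = n + 1`
and `φ` the `j`-th coordinate, it is the kernel of the `j`-th Riesz transform, up to
normalization. -/
noncomputable def rieszKernel {E : Type*} [NormedAddCommGroup E] [NormedSpace ℝ E]
    (φ : StrongDual ℝ E) (p : ℕ) (z : E) : ℝ :=
  φ z / ‖z‖ ^ p

section Shell

variable {E : Type*} [SeminormedAddCommGroup E] {ε r : ℝ}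

lemma neg_shell : -(shell ε r : Set E) = shell ε r := by
  ext y
  simp [shell]

lemma shell_subset_shell_zero (hε : 0 ≤ ε) : (shell ε r : Set E) ⊆ shell 0 r :=
  fun _ hy => ⟨hε.trans_lt hy.1, hy.2⟩

lemma measurableSet_shell [MeasurableSpace E] [OpensMeasurableSpace E] :
    MeasurableSet (shell ε r : Set E) :=
  continuous_norm.measurable (measurableSet_Ioo (a := ε) (b := r))

end Shell

section PrincipalValue

lemma setIntegral_eq_zero_of_odd {G F : Type*} [InvolutiveNeg G] [MeasurableSpace G]
    [MeasurableNeg G] [NormedAddCommGroup F] [NormedSpace ℝ F] {μ : Measure G} [μ.IsNegInvariant]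
    {s : Set G} {f : G → F} (hs : -s = s) (hf : f.Odd) : ∫ y in s, f y ∂μ = 0 := by
  have hneg : ∫ y in -s, f (-y) ∂μ = ∫ y in s, f y ∂μ :=
    (Measure.measurePreserving_neg μ).setIntegral_preimage_emb
      (MeasurableEquiv.neg G).measurableEmbedding f s
  simp only [hs, hf.eq, integral_neg] at hneg
  have : IsAddTorsionFree F := .of_isTorsionFree ℝ F
  exact neg_eq_self.1 hneg

variable {E F : Type*} [SeminormedAddCommGroup E] [MeasurableSpace E]
  [NormedAddCommGroup F] [NormedSpace ℝ F] {μ : Measure E} {r : ℝ}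

lemma tendsto_setIntegral_shell [OpensMeasurableSpace E] {g : E → F}
    (hg : IntegrableOn g (shell 0 r) μ) :
    Tendsto (fun ε : ℝ => ∫ y in shell ε r, g y ∂μ) (nhdsWithin 0 (Set.Ioi 0))
      (nhds (∫ y in shell 0 r, g y ∂μ)) := by
  have hcover : AECover (μ.restrict (shell 0 r)) (nhdsWithin 0 (Set.Ioi 0))
      (fun ε : ℝ => (shell ε r : Set E)) := by
    refine ⟨?_, fun _ => measurableSet_shell⟩
    filter_upwards [ae_restrict_mem measurableSet_shell] with y hy
    filter_upwards [nhdsWithin_le_nhds (Iio_mem_nhds hy.1)] with ε hε using ⟨hε, hy.2⟩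
  refine (hcover.integral_tendsto_of_countably_generated hg).congr' ?_
  filter_upwards [self_mem_nhdsWithin] with ε hε
  rw [Measure.restrict_restrict_of_subset (shell_subset_shell_zero (le_of_lt hε))]

lemma tendsto_setIntegral_shell_smul_of_odd [OpensMeasurableSpace E] [MeasurableNeg E]
    [μ.IsNegInvariant] {f : E → ℝ} {k : E → F} (c : ℝ) (hk : k.Odd)
    (hki : ∀ ε > 0, IntegrableOn k (shell ε r) μ)
    (hfk : IntegrableOn (fun y => (f y - c) • k y) (shell 0 r) μ) :
    Tendsto (fun ε : ℝ => ∫ y in shell ε r, f y • k y ∂μ) (nhdsWithin 0 (Set.Ioi 0))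
      (nhds (∫ y in shell 0 r, (f y - c) • k y ∂μ)) := by
  refine (tendsto_setIntegral_shell hfk).congr' ?_
  filter_upwards [self_mem_nhdsWithin] with ε hε
  calc ∫ y in shell ε r, (f y - c) • k y ∂μ
      = ∫ y in shell ε r, (f y - c) • k y ∂μ + ∫ y in shell ε r, c • k y ∂μ := by
        rw [integral_smul, setIntegral_eq_zero_of_odd neg_shell hk, smul_zero, add_zero]
    _ = ∫ y in shell ε r, f y • k y ∂μ := by
        rw [← integral_add (f := fun y => (f y - c) • k y) (g := fun y => c • k y)
          (hfk.mono_set (shell_subset_shell_zero (le_of_lt hε))) ((hki ε hε).smul c)]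
        simp only [← add_smul, sub_add_cancel]

end PrincipalValue

section InvPow

variable {a b : ℝ}

lemma inv_pow_le_two_pow_div_pow (hb : 0 < b) (hab : b ≤ 2 * a) (p : ℕ) :
    (a ^ p)⁻¹ ≤ 2 ^ p / b ^ p := by
  have ha : 0 < a := by linarith
  rw [← div_pow, ← inv_pow]
  gcongr
  rwa [inv_le_iff_one_le_mul₀ ha, div_mul_eq_mul_div, one_le_div hb]

lemma abs_inv_pow_sub_inv_pow_le (hb : 0 < b) (hab : b ≤ 2 * a) (p : ℕ) :
    |(a ^ p)⁻¹ - (b ^ p)⁻¹| ≤ p * 2 ^ p * |a - b| / b ^ (p + 1) := by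
  have ha : 0 < a := by linarith
  have hinv : a⁻¹ ≤ 2 / b := by simpa only [pow_one] using inv_pow_le_two_pow_div_pow hb hab 1
  have hsub : |a⁻¹ - b⁻¹| ≤ 2 / b * |a - b| / b :=
    calc |a⁻¹ - b⁻¹| = a⁻¹ * |a - b| / b := by
          rw [inv_sub_inv ha.ne' hb.ne', abs_div, abs_sub_comm b a, abs_of_pos (mul_pos ha hb)]
          field_simp
      _ ≤ 2 / b * |a - b| / b := by gcongr
  have hmax : max |a⁻¹| |b⁻¹| ≤ 2 / b := by
    rw [abs_of_pos (inv_pos.2 ha), abs_of_pos (inv_pos.2 hb), ← one_div b]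
    exact max_le hinv (by gcongr; norm_num)
  calc |(a ^ p)⁻¹ - (b ^ p)⁻¹|
      ≤ |a⁻¹ - b⁻¹| * p * max |a⁻¹| |b⁻¹| ^ (p - 1) := by
        simpa only [inv_pow] using abs_pow_sub_pow_le a⁻¹ b⁻¹ p
    _ ≤ 2 / b * |a - b| / b * p * (2 / b) ^ (p - 1) := by gcongr
    _ = p * 2 ^ p * |a - b| / b ^ (p + 1) := by
        cases p
        · simp
        · simp only [Nat.add_sub_cancel, div_pow, pow_succ]
          field_simp

end InvPow

section RieszKernel

variable {E : Type*} [NormedAddCommGroup E] [NormedSpace ℝ E]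
  (φ ψ : StrongDual ℝ E) (p : ℕ)

lemma rieszKernel_odd : (rieszKernel φ p).Odd := fun z => by
  simp [rieszKernel, neg_div]

lemma abs_rieszKernel_le (z : E) : |rieszKernel φ p z| ≤ ‖φ‖ * (‖z‖ / ‖z‖ ^ p) := by
  rw [rieszKernel, abs_div, abs_of_nonneg (by positivity : 0 ≤ ‖z‖ ^ p), ← mul_div_assoc]
  gcongr
  exact φ.le_opNorm z

lemma abs_rieszKernel_sub_le {x y : E} (hx : x ≠ 0) (hxy : 2 * ‖y‖ ≤ ‖x‖) :
    |rieszKernel φ p (x - y) - rieszKernel φ p x| ≤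
      (p + 1) * 2 ^ p * ‖φ‖ / ‖x‖ ^ p * ‖y‖ := by
  have hx0 : 0 < ‖x‖ := norm_pos_iff.2 hx
  have hdiff : |‖x - y‖ - ‖x‖| ≤ ‖y‖ := by simpa using abs_norm_sub_norm_le (x - y) x
  have hhalf : ‖x‖ ≤ 2 * ‖x - y‖ := by linarith [(abs_le.1 hdiff).1]
  have hradial : |φ x * ((‖x - y‖ ^ p)⁻¹ - (‖x‖ ^ p)⁻¹)| ≤ p * 2 ^ p * ‖φ‖ / ‖x‖ ^ p * ‖y‖ :=
    calc |φ x * ((‖x - y‖ ^ p)⁻¹ - (‖x‖ ^ p)⁻¹)|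
        ≤ ‖φ‖ * ‖x‖ * (p * 2 ^ p * ‖y‖ / ‖x‖ ^ (p + 1)) := by
          rw [abs_mul]
          gcongr
          · exact φ.le_opNorm x
          · exact (abs_inv_pow_sub_inv_pow_le hx0 hhalf p).trans (by gcongr)
      _ = p * 2 ^ p * ‖φ‖ / ‖x‖ ^ p * ‖y‖ := by
          rw [pow_succ]
          field_simp
  have hlinear : |φ y * (‖x - y‖ ^ p)⁻¹| ≤ 2 ^ p * ‖φ‖ / ‖x‖ ^ p * ‖y‖ :=
    calc |φ y * (‖x - y‖ ^ p)⁻¹| ≤ ‖φ‖ * ‖y‖ * (2 ^ p / ‖x‖ ^ p) := by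
          rw [abs_mul, abs_of_nonneg (by positivity : 0 ≤ (‖x - y‖ ^ p)⁻¹)]
          gcongr
          · exact φ.le_opNorm y
          · exact inv_pow_le_two_pow_div_pow hx0 hhalf p
      _ = 2 ^ p * ‖φ‖ / ‖x‖ ^ p * ‖y‖ := by ring
  calc |rieszKernel φ p (x - y) - rieszKernel φ p x|
      = |φ x * ((‖x - y‖ ^ p)⁻¹ - (‖x‖ ^ p)⁻¹) - φ y * (‖x - y‖ ^ p)⁻¹| := by
        simp only [rieszKernel, map_sub, div_eq_mul_inv]
        congr 1
        ring
    _ ≤ p * 2 ^ p * ‖φ‖ / ‖x‖ ^ p * ‖y‖ + 2 ^ p * ‖φ‖ / ‖x‖ ^ p * ‖y‖ :=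
        (abs_sub _ _).trans (add_le_add hradial hlinear)
    _ = (p + 1) * 2 ^ p * ‖φ‖ / ‖x‖ ^ p * ‖y‖ := by ring

lemma abs_rieszKernel_sub_mul_rieszKernel_le {x y : E} (hx : x ≠ 0) (hxy : 2 * ‖y‖ ≤ ‖x‖) :
    |(rieszKernel φ p (x - y) - rieszKernel φ p x) * rieszKernel ψ p y| ≤
      (p + 1) * 2 ^ p * ‖φ‖ * ‖ψ‖ / ‖x‖ ^ p * (‖y‖ * (‖y‖ / ‖y‖ ^ p)) :=
  calc |(rieszKernel φ p (x - y) - rieszKernel φ p x) * rieszKernel ψ p y|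
      ≤ (p + 1) * 2 ^ p * ‖φ‖ / ‖x‖ ^ p * ‖y‖ * (‖ψ‖ * (‖y‖ / ‖y‖ ^ p)) := by
        rw [abs_mul]
        gcongr
        exacts [abs_rieszKernel_sub_le φ p hx hxy, abs_rieszKernel_le ψ p y]
    _ = (p + 1) * 2 ^ p * ‖φ‖ * ‖ψ‖ / ‖x‖ ^ p * (‖y‖ * (‖y‖ / ‖y‖ ^ p)) := by ring

variable [MeasurableSpace E] [BorelSpace E]

@[fun_prop]
lemma measurable_rieszKernel : Measurable (rieszKernel φ p) := by
  unfold rieszKernel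
  fun_prop

variable (μ : Measure E) {p} {ε r : ℝ}

lemma integrableOn_shell_rieszKernel [ProperSpace E] [IsFiniteMeasureOnCompacts μ] (hε : 0 < ε) :
    IntegrableOn (rieszKernel φ p) (shell ε r) μ := by
  have hfinite : μ (shell ε r) ≠ ⊤ :=
    ((measure_mono fun y hy => mem_ball_zero_iff.2 hy.2).trans_lt
      (measure_ball_lt_top (x := 0) (r := r))).ne
  refine Measure.integrableOn_of_bounded (M := ‖φ‖ * (r / ε ^ p)) hfinite
    (measurable_rieszKernel φ p).aestronglyMeasurable ?_
  filter_upwards [ae_restrict_mem measurableSet_shell] with y hy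
  have hr : 0 ≤ r := (norm_nonneg y).trans hy.2.le
  refine (abs_rieszKernel_le φ p y).trans ?_
  gcongr
  exacts [hy.2.le, hy.1.le]

variable [FiniteDimensional ℝ E] [Nontrivial E] [μ.IsAddHaarMeasure]

lemma locallyIntegrable_norm_mul_norm_div_norm_pow (hp : p ≤ Module.finrank ℝ E + 1) :
    LocallyIntegrable (fun y : E => ‖y‖ * (‖y‖ / ‖y‖ ^ p)) μ := by
  have hp' : (p : ℝ) - 2 < Module.finrank ℝ E := by
    have : (p : ℝ) ≤ Module.finrank ℝ E + 1 := mod_cast hp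
    linarith
  refine locallyIntegrable_of_norm_le_rpow (C := 1) (α := p - 2) Module.finrank_pos hp'
    (.of_forall fun y => ?_) (by fun_prop)
  rcases eq_or_ne y 0 with rfl | hy
  · simpa using Real.rpow_nonneg le_rfl _
  · rw [neg_sub, Real.rpow_sub (norm_pos_iff.2 hy), one_mul, Real.norm_of_nonneg (by positivity)]
    norm_cast
    exact le_of_eq (by ring)

lemma integrableOn_shell_norm_mul_norm_div_norm_pow (hp : p ≤ Module.finrank ℝ E + 1) :
    IntegrableOn (fun y : E => ‖y‖ * (‖y‖ / ‖y‖ ^ p)) (shell ε r) μ :=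
  ((locallyIntegrable_norm_mul_norm_div_norm_pow μ hp).integrableOn_isCompact
    (isCompact_closedBall 0 r)).mono_set fun _ hy => mem_closedBall_zero_iff.2 hy.2.le

theorem stmt12_general (hp : p ≤ Module.finrank ℝ E + 1) (hr : 0 < r) :
    ∃ C : ℝ, 0 < C ∧ ∀ x : E, 2 * r ≤ ‖x‖ →
      ∃ L : ℝ,
        Tendsto (fun ε : ℝ => ∫ y in shell ε r, rieszKernel φ p (x - y) * rieszKernel ψ p y ∂μ)
          (nhdsWithin 0 (Set.Ioi 0)) (nhds L)
        ∧ |L| ≤ C / ‖x‖ ^ p := by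
  set w : E → ℝ := fun y => ‖y‖ * (‖y‖ / ‖y‖ ^ p)
  have hw : IntegrableOn w (shell 0 r) μ := integrableOn_shell_norm_mul_norm_div_norm_pow μ hp
  set A : ℝ := (p + 1) * 2 ^ p * ‖φ‖ * ‖ψ‖
  refine ⟨A * (∫ y in shell 0 r, w y ∂μ) + 1, by positivity, fun x hx => ?_⟩
  have hx0 : x ≠ 0 := norm_pos_iff.1 (by linarith)
  set g : E → ℝ := fun y => (rieszKernel φ p (x - y) - rieszKernel φ p x) * rieszKernel ψ p y
  have hbound : ∀ᵐ y ∂μ.restrict (shell 0 r), ‖g y‖ ≤ A / ‖x‖ ^ p * w y := by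
    filter_upwards [ae_restrict_mem measurableSet_shell] with y hy
    exact abs_rieszKernel_sub_mul_rieszKernel_le φ ψ p hx0 (by linarith [hy.2])
  have hg : IntegrableOn g (shell 0 r) μ := (hw.const_mul _).mono' (by fun_prop) hbound
  refine ⟨∫ y in shell 0 r, g y ∂μ, tendsto_setIntegral_shell_smul_of_odd _
    (rieszKernel_odd ψ p) (fun ε hε => integrableOn_shell_rieszKernel ψ μ hε) hg, ?_⟩
  calc |∫ y in shell 0 r, g y ∂μ|
      ≤ ∫ y in shell 0 r, A / ‖x‖ ^ p * w y ∂μ :=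
        norm_integral_le_of_norm_le (hw.const_mul _) hbound
    _ = A * (∫ y in shell 0 r, w y ∂μ) / ‖x‖ ^ p := by rw [integral_const_mul]; ring
    _ ≤ (A * (∫ y in shell 0 r, w y ∂μ) + 1) / ‖x‖ ^ p := by gcongr; linarith

end RieszKernel

theorem stmt12 (n : ℕ) (hn : 1 ≤ n) (j : Fin n) :
    ∃ C : ℝ, 0 < C ∧
      ∀ x : EuclideanSpace ℝ (Fin n), 2 < ‖x‖ →
        ∃ L : ℝ,
          Tendsto (fun ε : ℝ =>
              ∫ y in {y : EuclideanSpace ℝ (Fin n) | ε < ‖y‖ ∧ ‖y‖ < 1},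
                (x j - y j) / ‖x - y‖ ^ (n + 1) * (y j / ‖y‖ ^ (n + 1)))
            (nhdsWithin 0 (Set.Ioi 0)) (nhds L)
          ∧ |L| ≤ C / ‖x‖ ^ (n + 1) := by
  have : Nonempty (Fin n) := ⟨j⟩
  obtain ⟨C, hC, h⟩ := stmt12_general (EuclideanSpace.proj j) (EuclideanSpace.proj j)
    (volume : Measure (EuclideanSpace ℝ (Fin n))) (p := n + 1) (by simp) one_pos
  exact ⟨C, hC, fun x hx => h x (by linarith)⟩
end

section
/- Let g : ℝ → ℝ be defined by g(y) = log( |y| / |y−1| ) for y ∉ {0,1} and g(0) = g(1) = 0, and define F : ℝ → [0, ∞] by F(x) = sup_{ε>0} | ∫_{{y : |y−x| > ε}} g(y) / (y−x) dy |. Then F is not in weak L¹(ℝ): sup_{t>0} t · volume( { x ∈ ℝ : F(x) > t } ) = ∞, i.e., for every C > 0 there exists t > 0 with t · volume( { x ∈ ℝ : F(x) > t } ) > C. -/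
open MeasureTheory ENNReal

/-- `g(y) = log(|y|/|y−1|)`; with Mathlib's conventions (`x/0 = 0`, `Real.log 0 = 0`)
this function takes the value `0` at `y = 0` and `y = 1`. -/
noncomputable def gfun (y : ℝ) : ℝ := Real.log (|y| / |y - 1|)

/-- The maximal Hilbert transform of `gfun`, as a function with values in `[0,∞]`. -/
noncomputable def Fmax (x : ℝ) : ℝ≥0∞ :=
  ⨆ (ε : ℝ) (_ : 0 < ε),
    ENNReal.ofReal |∫ y in {y : ℝ | ε < |y - x|}, gfun y / (y - x)|

/-!
The function `g` is odd about `1 / 2`, nonnegative to its right, and decays like `1 / y`. Truncating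
the Hilbert transform of `g` at `x` with the radius `x - 1 / 2` removes the interval symmetric
about `x` with left endpoint `1 / 2`, and what remains is the integral of a nonnegative function.
On `(-x, 0)` this function is at least `(1 - y)⁻¹ / (2 * x)`, so `F x ≥ log (1 + x) / (2 * x)` and
`x * F x → ∞`. Hence for every `C`, once `a` is large, `F > C / a` on the whole interval
`[a, 2 * a]` of length `a`, so `F` is not in weak `L¹`.
-/

open Filter Set Asymptotics
open scoped Topology NNReal

lemma exists_lt_mul_volume_superlevel_of_tendsto {Φ : ℝ → ℝ≥0∞}
    (hΦ : Tendsto (fun x => ENNReal.ofReal x * Φ x) atTop (𝓝 ∞)) (C : ℝ≥0) :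
    ∃ t : ℝ, 0 < t ∧ C < ENNReal.ofReal t * volume {x : ℝ | ENNReal.ofReal t < Φ x} := by
  obtain ⟨a, ha, hlarge⟩ : ∃ a : ℝ, 0 < a ∧
      ∀ x, a ≤ x → ENNReal.ofReal (2 * (C + 1)) < ENNReal.ofReal x * Φ x := by
    obtain ⟨b, hb⟩ := eventually_atTop.mp (hΦ.eventually_const_lt ENNReal.ofReal_lt_top)
    exact ⟨max b 1, by positivity, fun x hx => hb x ((le_max_left b 1).trans hx)⟩
  have ht : 0 < (C + 1) / a := by positivity
  have hsub : Icc a (2 * a) ⊆ {x : ℝ | ENNReal.ofReal ((C + 1) / a) < Φ x} := by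
    rintro x ⟨hax, hxa⟩
    by_contra! hle
    refine (hlarge x hax).not_ge ?_
    calc ENNReal.ofReal x * Φ x
        ≤ ENNReal.ofReal (2 * a) * ENNReal.ofReal ((C + 1) / a) := by gcongr; simpa using hle
      _ = ENNReal.ofReal (2 * (C + 1)) := by
        rw [← ENNReal.ofReal_mul (by positivity)]
        congr 1
        field_simp
  refine ⟨(C + 1) / a, ht, ?_⟩
  calc (C : ℝ≥0∞) < ENNReal.ofReal (C + 1) := by
        rw [← ENNReal.ofReal_coe_nnreal]
        exact (ENNReal.ofReal_lt_ofReal_iff (by positivity)).mpr (lt_add_one _)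
    _ = ENNReal.ofReal ((C + 1) / a) * volume (Icc a (2 * a)) := by
        rw [Real.volume_Icc, ← ENNReal.ofReal_mul ht.le]
        congr 1
        field_simp
        ring
    _ ≤ _ := by gcongr

lemma integrableAtFilter_cocompact_inv_mul_inv :
    IntegrableAtFilter (fun y : ℝ => y⁻¹ * y⁻¹) (cocompact ℝ) := by
  have hO : (fun y : ℝ => y⁻¹ * y⁻¹) =O[cocompact ℝ] fun y => (1 + y ^ 2)⁻¹ := by
    refine IsBigO.of_bound 2 ?_
    filter_upwards [tendsto_norm_cocompact_atTop.eventually_ge_atTop 1] with y hy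
    have hy2 : 1 ≤ y ^ 2 := (one_le_sq_iff_one_le_abs y).mpr hy
    rw [Real.norm_of_nonneg (mul_self_nonneg _), Real.norm_of_nonneg (by positivity),
      ← mul_inv, ← sq, ← div_eq_mul_inv, inv_le_comm₀ (by positivity) (by positivity), inv_div]
    linarith
  exact hO.integrableAtFilter
    (Measurable.aestronglyMeasurable (by fun_prop)).stronglyMeasurableAtFilter
    (integrable_inv_one_add_sq.integrableAtFilter _)

lemma locallyIntegrable_of_forall_intervalIntegrable {E : Type*} [NormedAddCommGroup E]
    {f : ℝ → E} {μ : Measure ℝ} (hf : ∀ a b, IntervalIntegrable f μ a b) :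
    LocallyIntegrable f μ := fun x => by
  refine ⟨Ioc (x - 1) (x + 1), Ioc_mem_nhds (by linarith) (by linarith), ?_⟩
  exact (intervalIntegrable_iff_integrableOn_Ioc_of_le (by linarith)).mp (hf _ _)

/-- The Hilbert transform of `f` truncated at radius `ε`, without the normalizing factor `1 / π`.
It takes the value `0` when the integral diverges. -/
noncomputable def truncatedHilbert (f : ℝ → ℝ) (ε x : ℝ) : ℝ :=
  ∫ y in {y : ℝ | ε < |y - x|}, f y / (y - x)

lemma measurableSet_lt_abs_sub (ε x : ℝ) : MeasurableSet {y : ℝ | ε < |y - x|} :=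
  measurableSet_lt measurable_const (by fun_prop)

lemma integrableOn_div_sub {f : ℝ → ℝ} (hf : LocallyIntegrable f)
    (hdecay : f =O[cocompact ℝ] fun y => y⁻¹) {ε : ℝ} (hε : 0 < ε) (x : ℝ) :
    IntegrableOn (fun y => f y / (y - x)) {y | ε < |y - x|} := by
  have hmeas := measurableSet_lt_abs_sub ε x
  rw [← integrable_indicator_iff hmeas]
  have hloc : LocallyIntegrable ({y | ε < |y - x|}.indicator fun y => f y / (y - x)) := by
    refine (hf.smul ε⁻¹).mono ?_ (.of_forall fun y => ?_)
    · exact (hf.aestronglyMeasurable.div₀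
        (Measurable.aestronglyMeasurable (by fun_prop))).indicator hmeas
    · rw [norm_indicator_eq_indicator_norm]
      refine indicator_apply_le' (fun hy => ?_) fun _ => norm_nonneg _
      have hy : ε ≤ |y - x| := le_of_lt hy
      rw [Pi.smul_apply, norm_smul, norm_div, Real.norm_of_nonneg (inv_pos.mpr hε).le,
        ← div_eq_inv_mul, Real.norm_eq_abs (y - x)]
      gcongr
  have hkernel : (fun y => (y - x)⁻¹) =O[cocompact ℝ] fun y => y⁻¹ :=
    (IsEquivalent.sub_isLittleO (.refl (u := id))
      (isLittleO_const_left.mpr (.inr tendsto_norm_cocompact_atTop))).inv.isBigO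
  refine hloc.integrable_of_isBigO_cocompact ?_ integrableAtFilter_cocompact_inv_mul_inv
  refine (IsBigO.of_norm_le fun y => norm_indicator_le_norm_self _ y).trans ?_
  simpa only [div_eq_mul_inv, isBigO_norm_left] using hdecay.mul hkernel

/-- The radius `x - c` removes exactly the interval `[c, 2 * x - c]`, off which `y - x` and `y - c`
have the same sign, so that the integrand is nonnegative. -/
lemma setIntegral_div_sub_le_truncatedHilbert {f : ℝ → ℝ} (hf : LocallyIntegrable f)
    (hdecay : f =O[cocompact ℝ] fun y => y⁻¹) {c x : ℝ} (hsign : ∀ y, 0 ≤ (y - c) * f y)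
    (hx : c < x) {s : Set ℝ} (hs : s ⊆ {y | x - c < |y - x|}) :
    ∫ y in s, f y / (y - x) ≤ truncatedHilbert f (x - c) x := by
  refine setIntegral_mono_set (integrableOn_div_sub hf hdecay (sub_pos.mpr hx) x) ?_ hs.eventuallyLE
  filter_upwards [ae_restrict_mem (measurableSet_lt_abs_sub (x - c) x)] with y hy
  rcases lt_abs.mp hy with hy | hy
  · exact div_nonneg (nonneg_of_mul_nonneg_right (hsign y) (by linarith)) (by linarith)
  · exact div_nonneg_of_nonpos (nonpos_of_mul_nonneg_right (hsign y) (by linarith)) (by linarith)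

lemma gfun_one_sub (y : ℝ) : gfun (1 - y) = -gfun y := by
  rw [gfun, gfun, ← Real.log_inv, inv_div, abs_sub_comm 1 y, sub_sub_cancel_left, abs_neg]

lemma gfun_of_one_lt {y : ℝ} (hy : 1 < y) : gfun y = Real.log (y / (y - 1)) := by
  rw [gfun, abs_of_pos (by linarith), abs_of_pos (by linarith)]

lemma inv_le_gfun {y : ℝ} (hy : 1 < y) : y⁻¹ ≤ gfun y := by
  have hy' : 0 < y - 1 := by linarith
  have hy0 : 0 < y := by linarith
  calc y⁻¹ = 1 - (y / (y - 1))⁻¹ := by rw [inv_div, one_sub_div hy0.ne', sub_sub_self, one_div]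
    _ ≤ gfun y := by
      rw [gfun_of_one_lt hy]
      exact Real.one_sub_inv_le_log_of_pos (div_pos hy0 hy')

lemma gfun_le_inv {y : ℝ} (hy : 1 < y) : gfun y ≤ (y - 1)⁻¹ := by
  have hy' : 0 < y - 1 := by linarith
  calc gfun y ≤ y / (y - 1) - 1 := by
        rw [gfun_of_one_lt hy]
        exact Real.log_le_sub_one_of_pos (div_pos (by linarith) hy')
    _ = (y - 1)⁻¹ := by rw [div_sub_one hy'.ne', sub_sub_self, one_div]

lemma abs_gfun_le_inv {y : ℝ} (hy : 1 < y) : |gfun y| ≤ (y - 1)⁻¹ :=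
  (abs_of_nonneg ((inv_nonneg.mpr (by linarith)).trans (inv_le_gfun hy))).trans_le (gfun_le_inv hy)

lemma gfun_isBigO_inv : gfun =O[cocompact ℝ] fun y => y⁻¹ := by
  refine IsBigO.of_bound 2 ?_
  filter_upwards [tendsto_norm_cocompact_atTop.eventually_ge_atTop 2] with y hy
  rw [norm_inv, ← div_eq_mul_inv, Real.norm_eq_abs]
  rcases le_abs.mp hy with hy | hy
  · rw [Real.norm_of_nonneg (by linarith)]
    calc |gfun y| ≤ (y - 1)⁻¹ := abs_gfun_le_inv (by linarith)
      _ ≤ (y / 2)⁻¹ := by gcongr; linarith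
      _ = 2 / y := inv_div y 2
  · rw [Real.norm_of_nonpos (by linarith)]
    calc |gfun y| = |gfun (1 - y)| := by rw [gfun_one_sub, abs_neg]
      _ ≤ (1 - y - 1)⁻¹ := abs_gfun_le_inv (by linarith)
      _ = 1 / -y := by rw [one_div]; congr 1; ring
      _ ≤ 2 / -y := by gcongr; exact one_le_two

lemma gfun_nonneg {y : ℝ} (hy : 1 / 2 ≤ y) : 0 ≤ gfun y := by
  rcases eq_or_ne y 1 with rfl | hy1
  · simp [gfun]
  · refine Real.log_nonneg ?_
    rw [one_le_div (abs_pos.mpr (sub_ne_zero.mpr hy1)), abs_of_nonneg (by linarith : 0 ≤ y)]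
    exact abs_le.mpr ⟨by linarith, by linarith⟩

lemma sub_half_mul_gfun_nonneg (y : ℝ) : 0 ≤ (y - 1 / 2) * gfun y := by
  rcases le_total (1 / 2) y with hy | hy
  · exact mul_nonneg (sub_nonneg.mpr hy) (gfun_nonneg hy)
  · have hreflect : 0 ≤ gfun (1 - y) := gfun_nonneg (by linarith)
    rw [gfun_one_sub, neg_nonneg] at hreflect
    exact mul_nonneg_of_nonpos_of_nonpos (sub_nonpos.mpr hy) hreflect

lemma gfun_ae_eq : gfun =ᵐ[volume] fun y => Real.log y - Real.log (y - 1) := by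
  filter_upwards [Measure.ae_ne volume 0, Measure.ae_ne volume 1] with y hy0 hy1
  rw [gfun, Real.log_div (abs_ne_zero.mpr hy0) (abs_ne_zero.mpr (sub_ne_zero.mpr hy1)),
    Real.log_abs, Real.log_abs]

lemma locallyIntegrable_gfun : LocallyIntegrable gfun := by
  refine LocallyIntegrable.congr ?_ gfun_ae_eq.symm
  refine locallyIntegrable_of_forall_intervalIntegrable fun a b => ?_
  have hshift :=
    (intervalIntegral.intervalIntegrable_log' (a := a - 1) (b := b - 1)).comp_sub_right 1
  rw [sub_add_cancel, sub_add_cancel] at hshift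
  exact intervalIntegral.intervalIntegrable_log'.sub hshift

lemma inv_div_le_gfun_div_sub {x y : ℝ} (hxy : -x ≤ y) (hy : y < 0) :
    (1 - y)⁻¹ / (2 * x) ≤ gfun y / (y - x) := by
  have hg : (1 - y)⁻¹ ≤ -gfun y := gfun_one_sub y ▸ inv_le_gfun (by linarith)
  have hinv : 0 ≤ (1 - y)⁻¹ := inv_nonneg.mpr (by linarith)
  calc (1 - y)⁻¹ / (2 * x) ≤ -gfun y / (x - y) := by gcongr <;> linarith
    _ = gfun y / (y - x) := by rw [← neg_sub y x, neg_div_neg_eq]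

lemma setIntegral_inv_one_sub {x : ℝ} (hx : 0 ≤ x) :
    ∫ y in Ioo (-x) 0, (1 - y)⁻¹ = Real.log (1 + x) := by
  rw [← integral_Ioc_eq_integral_Ioo, ← intervalIntegral.integral_of_le (by linarith),
    intervalIntegral.integral_comp_sub_left (fun y => y⁻¹), sub_zero, sub_neg_eq_add,
    integral_inv_of_pos one_pos (by linarith), div_one]

lemma log_one_add_div_le_truncatedHilbert_gfun {x : ℝ} (hx : 1 / 2 < x) :
    Real.log (1 + x) / (2 * x) ≤ truncatedHilbert gfun (x - 1 / 2) x := by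
  have hsub : Ioo (-x) 0 ⊆ {y | x - 1 / 2 < |y - x|} := fun y hy => by
    have hyx : x - 1 / 2 < -(y - x) := by linarith [hy.2]
    exact lt_abs.mpr (.inr hyx)
  have hint : IntegrableOn (fun y => (1 - y)⁻¹ / (2 * x)) (Ioo (-x) 0) := by
    refine (ContinuousOn.integrableOn_Icc ?_).mono_set Ioo_subset_Icc_self
    have hne : ∀ y ∈ Icc (-x) 0, 1 - y ≠ 0 := fun y hy => ne_of_gt (by linarith [hy.2])
    exact (ContinuousOn.inv₀ (by fun_prop) hne).div_const _
  calc Real.log (1 + x) / (2 * x) = ∫ y in Ioo (-x) 0, (1 - y)⁻¹ / (2 * x) := by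
        rw [integral_div, setIntegral_inv_one_sub (by linarith)]
    _ ≤ ∫ y in Ioo (-x) 0, gfun y / (y - x) := by
        refine setIntegral_mono_on hint ?_ measurableSet_Ioo
          fun y hy => inv_div_le_gfun_div_sub hy.1.le hy.2
        exact (integrableOn_div_sub locallyIntegrable_gfun gfun_isBigO_inv
          (sub_pos.mpr hx) x).mono_set hsub
    _ ≤ truncatedHilbert gfun (x - 1 / 2) x :=
        setIntegral_div_sub_le_truncatedHilbert locallyIntegrable_gfun gfun_isBigO_inv
          sub_half_mul_gfun_nonneg hx hsub

lemma ofReal_truncatedHilbert_gfun_le_Fmax {ε : ℝ} (hε : 0 < ε) (x : ℝ) :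
    ENNReal.ofReal (truncatedHilbert gfun ε x) ≤ Fmax x :=
  le_iSup₂_of_le ε hε (ENNReal.ofReal_le_ofReal (le_abs_self _))

lemma tendsto_ofReal_mul_Fmax :
    Tendsto (fun x => ENNReal.ofReal x * Fmax x) atTop (𝓝 ∞) := by
  have hlog : Tendsto (fun x : ℝ => Real.log (1 + x) / 2) atTop atTop :=
    (Real.tendsto_log_atTop.comp (tendsto_atTop_add_const_left _ 1 tendsto_id)).atTop_div_const
      two_pos
  refine tendsto_nhds_top_mono (ENNReal.tendsto_ofReal_nhds_top.mpr hlog) ?_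
  filter_upwards [eventually_gt_atTop (1 / 2)] with x hx
  have hx0 : 0 < x := by linarith
  calc ENNReal.ofReal (Real.log (1 + x) / 2)
      = ENNReal.ofReal x * ENNReal.ofReal (Real.log (1 + x) / (2 * x)) := by
        rw [← ENNReal.ofReal_mul hx0.le]
        congr 1
        field_simp
    _ ≤ ENNReal.ofReal x * ENNReal.ofReal (truncatedHilbert gfun (x - 1 / 2) x) := by
        gcongr
        exact log_one_add_div_le_truncatedHilbert_gfun hx
    _ ≤ ENNReal.ofReal x * Fmax x := by
        gcongr
        exact ofReal_truncatedHilbert_gfun_le_Fmax (sub_pos.mpr hx) x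

theorem stmt14 :
    ∀ C : ℝ, 0 < C → ∃ t : ℝ, 0 < t ∧
      ENNReal.ofReal C
        < ENNReal.ofReal t * volume {x : ℝ | ENNReal.ofReal t < Fmax x} :=
  fun C _ => exists_lt_mul_volume_superlevel_of_tendsto tendsto_ofReal_mul_Fmax C.toNNReal
end
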